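/- There exists an absolute constant K such that for every continuous strictly convex function f : ℝ → ℝ and every finite set A ⊂ ℝ with |A| ≥ 2, one has max(|f(A)+f(A)|, |A−A|) ≥ K · |A|^{14/11} / (log|A|)^{2/11}. -/

import Mathlib

open Finset Pointwise

noncomputable def dlt (X Y : Finset ℝ) (s : ℝ) : ℕ :=
  ((X ×ˢ Y).filter (fun p => p.1 - p.2 = s)).card

noncomputable def sg (X Y : Finset ℝ) (s : ℝ) : ℕ :=
  ((X ×ˢ Y).filter (fun p => p.1 + p.2 = s)).card

noncomputable def En (X Y : Finset ℝ) : ℝ :=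
  ∑ s ∈ X - X, (dlt X X s : ℝ) * (dlt Y Y s : ℝ)

noncomputable def E3 (X : Finset ℝ) : ℝ :=
  ∑ s ∈ X - X, (dlt X X s : ℝ) ^ 3

noncomputable def E15 (X : Finset ℝ) : ℝ :=
  ∑ s ∈ X - X, (dlt X X s : ℝ) ^ ((3 : ℝ) / 2)

/-!
Write `δ_A(s)` for the number of representations `s = a - a'` with `a, a' ∈ A`, and `D = A - A`.
For each popular difference `s`, send a pair `(a, u)` with `a, u, u - s ∈ A` to `u - a`, which is
an element of `D` whose translate by `-s` is again in `D`. Cauchy–Schwarz, the collisions being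
counted by the third moment energy `E₃(A) = ∑ δ_A(x)³`, yields `|A|⁸ ≤ 8 |D| E(A, D) E₃(A)`.

By strict convexity two distinct translates of the graph of `f` meet at most once. The translates by
`B × C` therefore satisfy a Szemerédi–Trotter bound on the grid `X × (f(A) + C)`: cut the grid into
`s × s` blocks, of which a convex curve visits only `O(s)`. Hence at most
`O(|f(A) + C|² |B|² / (|C| τ³))` elements have `τ` or more representations in `A + B`. Summing over
`τ` bounds `E(A, D)` (with `B = D`) and `E₃(A)` (with `B = -A`); the theorem is the case `C = f(A)`.
-/

section Incidences

variable {α β : Type*}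

theorem card_le_card_image_add_card_collisions [DecidableEq β] (S : Finset α) (φ : α → β) :
    #S ≤ #(S.image φ) + #{p ∈ S.offDiag | φ p.1 = φ p.2} := by
  have hfiber (w : β) :
      #{x ∈ S | φ x = w} ≤ 1 + #{p ∈ {p ∈ S.offDiag | φ p.1 = φ p.2} | φ p.1 = w} := by
    have hoff : {p ∈ {p ∈ S.offDiag | φ p.1 = φ p.2} | φ p.1 = w} = {x ∈ S | φ x = w}.offDiag := by
      ext p
      simp only [mem_filter, mem_offDiag]
      grind
    rw [hoff, offDiag_card]
    have := two_mul_le_add_sq #{x ∈ S | φ x = w} 1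
    rw [mul_one, one_pow, sq] at this
    omega
  calc #S = ∑ w ∈ S.image φ, #{x ∈ S | φ x = w} := card_eq_sum_card_image φ S
    _ ≤ ∑ w ∈ S.image φ, (1 + #{p ∈ {p ∈ S.offDiag | φ p.1 = φ p.2} | φ p.1 = w}) :=
      sum_le_sum fun w _ => hfiber w
    _ = #(S.image φ) + #{p ∈ S.offDiag | φ p.1 = φ p.2} := by
      rw [sum_add_distrib, ← card_eq_sum_ones]
      congr 1
      refine (card_eq_sum_card_fiberwise fun p hp => ?_).symm
      exact mem_image_of_mem φ (mem_offDiag.1 (mem_filter.1 hp).1).1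

theorem mul_card_filter_eq_le {X : Finset α} {u : α → ℕ} {s k : ℕ}
    (hu : ∀ i, s * #{x ∈ X | u x = i} ≤ k) :
    s * #{p ∈ X ×ˢ X | u p.1 = u p.2} ≤ k * #X := by
  have hfiber : #{p ∈ X ×ˢ X | u p.1 = u p.2} = ∑ x ∈ X, #{x' ∈ X | u x' = u x} := by
    simp only [card_filter, sum_product, eq_comm]
  rw [hfiber, mul_sum, mul_comm k]
  exact sum_le_card_nsmul _ _ _ fun x _ => hu (u x)

theorem monotone_card_filter_lt [Preorder α] [DecidableLT α] (X : Finset α) :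
    Monotone fun x => #{z ∈ X | z < x} :=
  fun _ _ hxy => card_le_card (monotone_filter_right X fun _ _ hz => lt_of_lt_of_le hz hxy)

theorem strictMonoOn_card_filter_lt [Preorder α] [DecidableLT α] (X : Finset α) :
    StrictMonoOn (fun x => #{z ∈ X | z < x}) X := fun x hx y _ hxy =>
  card_lt_card <| (ssubset_iff_of_subset fun z hz => by
    simp only [mem_filter] at hz ⊢; exact ⟨hz.1, hz.2.trans hxy⟩).2
    ⟨x, mem_filter.2 ⟨hx, hxy⟩, by simp⟩

variable [LinearOrder α]

theorem exists_monotone_blocks (X : Finset α) {s : ℕ} (hs : 0 < s) (hsX : s ≤ #X) :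
    ∃ u : α → ℕ, Monotone u ∧ (∀ x ∈ X, u x < s) ∧ ∀ i, s * #{x ∈ X | u x = i} ≤ 2 * #X := by
  set rank : α → ℕ := fun x => #{z ∈ X | z < x}
  set q := #X / s + 1
  have hq : 0 < q := Nat.succ_pos _
  refine ⟨fun x => rank x / q, fun x y hxy => Nat.div_le_div_right (monotone_card_filter_lt X hxy),
    fun x _ => ?_, fun i => ?_⟩
  · have hrank : rank x ≤ #X := card_filter_le _ _
    rw [Nat.div_lt_iff_lt_mul hq]
    exact hrank.trans_lt (Nat.lt_mul_div_succ _ hs)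
  · have hblock : #{x ∈ X | rank x / q = i} ≤ q := by
      calc #{x ∈ X | rank x / q = i} ≤ #(Ico (i * q) (i * q + q)) := by
            refine card_le_card_of_injOn rank (fun x hx => ?_)
              ((strictMonoOn_card_filter_lt X).injOn.mono ?_)
            · have := (Nat.div_eq_iff hq).1 (mem_filter.1 hx).2
              simp only [coe_Ico, Set.mem_Ico]
              omega
            · exact_mod_cast filter_subset _ X
        _ = q := by simp
    calc s * #{x ∈ X | rank x / q = i} ≤ s * q := Nat.mul_le_mul_left s hblock
      _ = s * (#X / s) + s := by ring
      _ ≤ 2 * #X := by have := Nat.mul_div_le (#X) s; omega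

theorem card_image_prodMk_le_of_monotoneOn {S : Finset α} {a b : α → ℕ} {s : ℕ}
    (ha : MonotoneOn a S) (hb : MonotoneOn b S) (has : ∀ x ∈ S, a x < s) (hbs : ∀ x ∈ S, b x < s) :
    #(S.image fun x => (a x, b x)) ≤ 2 * s := by
  rw [← card_range (2 * s)]
  refine card_le_card_of_injOn (fun p => p.1 + p.2) ?_ ?_
  · simp only [coe_image, Set.mapsTo_image_iff]
    intro x hx
    have := has x hx
    have := hbs x hx
    simp only [coe_range, Set.mem_Iio, Function.comp_apply]
    omega
  · simp only [coe_image, Set.InjOn, Set.forall_mem_image, Prod.mk.injEq]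
    intro x hx y hy hsum
    rcases le_total x y with hxy | hxy
    · have := ha hx hy hxy
      have := hb hx hy hxy
      omega
    · have := ha hy hx hxy
      have := hb hy hx hxy
      omega

theorem card_image_prodMk_le_of_antitoneOn {S : Finset α} {a b : α → ℕ} {s : ℕ}
    (ha : MonotoneOn a S) (hb : AntitoneOn b S) (has : ∀ x ∈ S, a x < s) (hbs : ∀ x ∈ S, b x < s) :
    #(S.image fun x => (a x, b x)) ≤ 2 * s := by
  have hreflect : (S.image fun x => (a x, b x)) =
      (S.image fun x => (a x, s - 1 - b x)).image fun p => (p.1, s - 1 - p.2) := by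
    rw [image_image]
    refine image_congr fun x hx => ?_
    have := hbs x hx
    simp only [Function.comp_apply, Prod.mk.injEq, true_and]
    omega
  rw [hreflect]
  exact card_image_le.trans (card_image_prodMk_le_of_monotoneOn ha
    (fun x hx y hy hxy => Nat.sub_le_sub_left (hb hx hy hxy) _) has
    fun x hx => by have := has x hx; omega)

variable [LinearOrder β]

/-- Quasiconvexity of `g` along the points of `S`, in a form that needs only the orders on the
domain and codomain. -/
def OrderQuasiconvexOn (S : Set α) (g : α → β) : Prop :=
  ∀ ⦃x⦄, x ∈ S → ∀ ⦃y⦄, y ∈ S → ∀ ⦃z⦄, z ∈ S → x ≤ y → y ≤ z → g y ≤ max (g x) (g z)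

namespace OrderQuasiconvexOn

theorem card_image_cells_le {S : Finset α} {g : α → β} (hg : OrderQuasiconvexOn (S : Set α) g)
    {u : α → ℕ} {v : β → ℕ} (hu : Monotone u) (hv : Monotone v) {s : ℕ}
    (hus : ∀ x ∈ S, u x < s) (hvs : ∀ x ∈ S, v (g x) < s) :
    #(S.image fun x => (u x, v (g x))) ≤ 4 * s := by
  rcases S.eq_empty_or_nonempty with rfl | hS
  · simp
  obtain ⟨m, hm, hmin⟩ := S.exists_min_image g hS
  have hleft : #({x ∈ S | x ≤ m}.image fun x => (u x, v (g x))) ≤ 2 * s := by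
    refine card_image_prodMk_le_of_antitoneOn (hu.monotoneOn _) (fun x hx y hy hxy => hv ?_)
      (fun x hx => hus x (mem_filter.1 hx).1) fun x hx => hvs x (mem_filter.1 hx).1
    obtain ⟨hxS, -⟩ := mem_filter.1 hx
    obtain ⟨hyS, hym⟩ := mem_filter.1 hy
    exact (hg hxS hyS hm hxy hym).trans (max_le le_rfl (hmin x hxS))
  have hright : #({x ∈ S | m ≤ x}.image fun x => (u x, v (g x))) ≤ 2 * s := by
    refine card_image_prodMk_le_of_monotoneOn (hu.monotoneOn _) (fun x hx y hy hxy => hv ?_)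
      (fun x hx => hus x (mem_filter.1 hx).1) fun x hx => hvs x (mem_filter.1 hx).1
    obtain ⟨hxS, hmx⟩ := mem_filter.1 hx
    obtain ⟨hyS, -⟩ := mem_filter.1 hy
    exact (hg hm hxS hyS hmx hxy).trans (max_le (hmin y hyS) le_rfl)
  have hsplit : S = {x ∈ S | x ≤ m} ∪ {x ∈ S | m ≤ x} := by
    ext x
    have := le_total x m
    simp only [mem_union, mem_filter]
    tauto
  calc #(S.image fun x => (u x, v (g x)))
      = #({x ∈ S | x ≤ m}.image (fun x => (u x, v (g x))) ∪
          {x ∈ S | m ≤ x}.image fun x => (u x, v (g x))) := by rw [← image_union, ← hsplit]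
    _ ≤ 2 * s + 2 * s := (card_union_le _ _).trans (add_le_add hleft hright)
    _ = 4 * s := by ring

end OrderQuasiconvexOn

/-- Over the grid `X ×ˢ Y`, the graphs of the functions `g ℓ`, restricted to `S ℓ`, are
quasiconvex curves of which at most one passes through any two points with distinct abscissae. -/
structure IsCurveFamily {ι : Type*} (L : Finset ι) (g : ι → α → β) (S : ι → Finset α)
    (X : Finset α) (Y : Finset β) : Prop where
  subset : ∀ ℓ ∈ L, S ℓ ⊆ X
  map_mem : ∀ ℓ ∈ L, ∀ x ∈ S ℓ, g ℓ x ∈ Y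
  orderQuasiconvexOn : ∀ ℓ ∈ L, OrderQuasiconvexOn (S ℓ : Set α) (g ℓ)
  eq_of_meet_twice : ∀ ℓ ∈ L, ∀ ℓ' ∈ L, ∀ x ∈ S ℓ, x ∈ S ℓ' → ∀ x' ∈ S ℓ, x' ∈ S ℓ' →
    x ≠ x' → g ℓ x = g ℓ' x → g ℓ x' = g ℓ' x' → ℓ = ℓ'

namespace IsCurveFamily

variable {ι : Type*} {L : Finset ι} {g : ι → α → β} {S : ι → Finset α} {X : Finset α}
  {Y : Finset β}

-- A curve is determined by the two points of a collision, so no collision is counted twice.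
theorem sum_card_collisions_le (h : IsCurveFamily L g S X Y) (u : α → ℕ) (v : β → ℕ) :
    ∑ ℓ ∈ L, #{p ∈ (S ℓ).offDiag | (u p.1, v (g ℓ p.1)) = (u p.2, v (g ℓ p.2))} ≤
      #{p ∈ X ×ˢ X | u p.1 = u p.2} * #{p ∈ Y ×ˢ Y | v p.1 = v p.2} := by
  rw [← card_sigma, ← card_product]
  refine card_le_card_of_injOn (fun z => (z.2, g z.1 z.2.1, g z.1 z.2.2)) ?_ ?_
  · rintro ⟨ℓ, x, x'⟩ hz
    simp only [mem_coe, mem_sigma, mem_filter, mem_offDiag, Prod.mk.injEq, mem_product] at hz ⊢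
    obtain ⟨hℓ, ⟨hx, hx', -⟩, hu, hv⟩ := hz
    exact ⟨⟨⟨h.subset ℓ hℓ hx, h.subset ℓ hℓ hx'⟩, hu⟩,
      ⟨h.map_mem ℓ hℓ x hx, h.map_mem ℓ hℓ x' hx'⟩, hv⟩
  · rintro ⟨ℓ, x, x'⟩ hz ⟨ℓ', y, y'⟩ hw heq
    simp only [mem_coe, mem_sigma, mem_filter, mem_offDiag] at hz hw
    simp only [Prod.mk.injEq] at heq
    obtain ⟨⟨rfl, rfl⟩, hgx, hgx'⟩ := heq
    obtain rfl := h.eq_of_meet_twice ℓ hz.1 ℓ' hw.1 x hz.2.1.1 hw.2.1.1 x' hz.2.1.2.1 hw.2.1.2.1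
      hz.2.1.2.2 hgx hgx'
    rfl

theorem sq_mul_sum_card_le (h : IsCurveFamily L g S X Y) {s : ℕ} (hs : 0 < s) (hsX : s ≤ #X)
    (hsY : s ≤ #Y) : s ^ 2 * ∑ ℓ ∈ L, #(S ℓ) ≤ 4 * s ^ 3 * #L + 4 * (#X * #Y) ^ 2 := by
  obtain ⟨u, hu, hus, hucard⟩ := exists_monotone_blocks X hs hsX
  obtain ⟨v, hv, hvs, hvcard⟩ := exists_monotone_blocks Y hs hsY
  set PX := #{p ∈ X ×ˢ X | u p.1 = u p.2}
  set PY := #{p ∈ Y ×ˢ Y | v p.1 = v p.2}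
  have hcurve : ∀ ℓ ∈ L, #(S ℓ) ≤ 4 * s +
      #{p ∈ (S ℓ).offDiag | (u p.1, v (g ℓ p.1)) = (u p.2, v (g ℓ p.2))} := fun ℓ hℓ =>
    (card_le_card_image_add_card_collisions (S ℓ) fun x => (u x, v (g ℓ x))).trans <|
      Nat.add_le_add_right ((h.orderQuasiconvexOn ℓ hℓ).card_image_cells_le hu hv
        (fun x hx => hus x (h.subset ℓ hℓ hx)) fun x hx => hvs _ (h.map_mem ℓ hℓ x hx)) _
  have hsum : ∑ ℓ ∈ L, #(S ℓ) ≤ #L * (4 * s) + PX * PY := by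
    refine (sum_le_sum hcurve).trans ?_
    rw [sum_add_distrib, sum_const, smul_eq_mul]
    exact Nat.add_le_add_left (h.sum_card_collisions_le u v) _
  calc s ^ 2 * ∑ ℓ ∈ L, #(S ℓ) ≤ s ^ 2 * (#L * (4 * s) + PX * PY) := Nat.mul_le_mul_left _ hsum
    _ = 4 * s ^ 3 * #L + (s * PX) * (s * PY) := by ring
    _ ≤ 4 * s ^ 3 * #L + (2 * #X * #X) * (2 * #Y * #Y) := by
      gcongr _ + ?_ * ?_
      exacts [mul_card_filter_eq_le hucard, mul_card_filter_eq_le hvcard]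
    _ = 4 * s ^ 3 * #L + 4 * (#X * #Y) ^ 2 := by ring

theorem sum_card_pow_three_le (h : IsCurveFamily L g S X Y) (hL : 8 * #L ≤ ∑ ℓ ∈ L, #(S ℓ))
    (hY : ∑ ℓ ∈ L, #(S ℓ) ≤ 8 * #L * #Y) :
    (∑ ℓ ∈ L, #(S ℓ)) ^ 3 ≤ 2048 * (#L * #X * #Y) ^ 2 := by
  have hX : ∑ ℓ ∈ L, #(S ℓ) ≤ #L * #X :=
    sum_le_card_nsmul _ _ _ fun ℓ hℓ => card_le_card (h.subset ℓ hℓ)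
  set I := ∑ ℓ ∈ L, #(S ℓ)
  rcases (#L).eq_zero_or_pos with hL0 | hL0
  · have : I = 0 := by simpa [hL0] using hX
    simp [this]
  -- This size balances the two terms of `sq_mul_sum_card_le`.
  set s := I / (8 * #L) with hs_def
  have hs : 0 < s := Nat.div_pos hL (by omega)
  have hsI : s * (8 * #L) ≤ I := Nat.div_mul_le_self _ _
  have hIs : I ≤ 16 * #L * s := by
    have := Nat.lt_div_mul_add (a := I) (b := 8 * #L) (by omega)
    rw [← hs_def] at this
    nlinarith
  have hsX : s ≤ #X := Nat.div_le_of_le_mul (by nlinarith)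
  have hsY : s ≤ #Y := Nat.div_le_of_le_mul hY
  have hcell : s ^ 2 * I ≤ 4 * s ^ 3 * #L + 4 * (#X * #Y) ^ 2 := h.sq_mul_sum_card_le hs hsX hsY
  have hbound : s ^ 2 * I ≤ 8 * (#X * #Y) ^ 2 := by
    have : s ^ 2 * (s * (8 * #L)) ≤ s ^ 2 * I := by gcongr
    linarith
  calc I ^ 3 = I ^ 2 * I := by ring
    _ ≤ (16 * #L * s) ^ 2 * I := by gcongr
    _ = 256 * #L ^ 2 * (s ^ 2 * I) := by ring
    _ ≤ 256 * #L ^ 2 * (8 * (#X * #Y) ^ 2) := by gcongr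
    _ = 2048 * (#L * #X * #Y) ^ 2 := by ring

end IsCurveFamily

end Incidences

section Moments

variable {ι : Type*} {X : Finset ι} {r : ι → ℕ} {M : ℝ}

theorem sum_sum_Ioc_le_of_card_le (hM : ∀ τ : ℕ, (#{x ∈ X | τ ≤ r x} : ℝ) * τ ^ 3 ≤ M) {n : ℕ}
    (hr : ∀ x ∈ X, r x ≤ n) (T : ℕ) {w : ℕ → ℝ} (hw : ∀ τ, 0 ≤ w τ) :
    ∑ x ∈ X, ∑ τ ∈ Ioc T (r x), w τ * τ ^ 3 ≤ M * ∑ τ ∈ Ioc T n, w τ := by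
  have hswap : ∑ x ∈ X, ∑ τ ∈ Ioc T (r x), w τ * τ ^ 3 =
      ∑ τ ∈ Ioc T n, ∑ x ∈ X with τ ≤ r x, w τ * τ ^ 3 := by
    refine sum_comm' fun x τ => ?_
    simp only [mem_Ioc, mem_filter]
    constructor
    · rintro ⟨hx, hT, hτ⟩
      exact ⟨⟨hx, hτ⟩, hT, hτ.trans (hr x hx)⟩
    · rintro ⟨⟨hx, hτ⟩, hT, -⟩
      exact ⟨hx, hT, hτ⟩
  rw [hswap, mul_sum]
  refine sum_le_sum fun τ _ => ?_
  rw [sum_const, nsmul_eq_mul]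
  linarith [mul_le_mul_of_nonneg_left (hM τ) (hw τ)]

theorem sum_cube_le_of_card_le (hM : ∀ τ : ℕ, (#{x ∈ X | τ ≤ r x} : ℝ) * τ ^ 3 ≤ M) {n : ℕ}
    (hr : ∀ x ∈ X, r x ≤ n) : ∑ x ∈ X, (r x : ℝ) ^ 3 ≤ 3 * M * (1 + Real.log n) := by
  have hcube (m : ℕ) : (m : ℝ) ^ 3 ≤ ∑ τ ∈ Ioc 0 m, 3 * (τ : ℝ)⁻¹ * τ ^ 3 := by
    induction m with
    | zero => simp
    | succ m ih =>
      rw [sum_Ioc_succ_top (Nat.zero_le m)]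
      have hterm : 3 * ((m + 1 : ℕ) : ℝ)⁻¹ * (m + 1 : ℕ) ^ 3 = 3 * (m + 1 : ℝ) ^ 2 := by
        push_cast
        field_simp
      rw [hterm]
      push_cast
      nlinarith [(Nat.cast_nonneg m : (0 : ℝ) ≤ m)]
  have hM0 : 0 ≤ M := by simpa using hM 0
  have hharmonic : ∑ τ ∈ Ioc 0 n, 3 * (τ : ℝ)⁻¹ = 3 * (harmonic n : ℝ) := by
    rw [← mul_sum, harmonic_eq_sum_Icc, Rat.cast_sum]
    simp only [Rat.cast_inv, Rat.cast_natCast]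
    rfl
  calc ∑ x ∈ X, (r x : ℝ) ^ 3
      ≤ ∑ x ∈ X, ∑ τ ∈ Ioc 0 (r x), 3 * (τ : ℝ)⁻¹ * τ ^ 3 := sum_le_sum fun x _ => hcube (r x)
    _ ≤ M * ∑ τ ∈ Ioc 0 n, 3 * (τ : ℝ)⁻¹ :=
      sum_sum_Ioc_le_of_card_le hM hr 0 fun τ => by positivity
    _ = 3 * M * harmonic n := by rw [hharmonic]; ring
    _ ≤ 3 * M * (1 + Real.log n) := by gcongr; exact harmonic_le_one_add_log n

theorem sum_sq_le_of_card_le (hM : ∀ τ : ℕ, (#{x ∈ X | τ ≤ r x} : ℝ) * τ ^ 3 ≤ M) (T : ℕ) :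
    ∑ x ∈ X, (r x : ℝ) ^ 2 ≤ T * ∑ x ∈ X, (r x : ℝ) + 4 * M / (T + 1) := by
  have hsq (m : ℕ) : (m : ℝ) ^ 2 ≤ T * m + ∑ τ ∈ Ioc T m, 2 * ((τ : ℝ) ^ 2)⁻¹ * τ ^ 3 := by
    rcases le_total m T with hmT | hTm
    · rw [Ioc_eq_empty_of_le hmT, sum_empty, add_zero, sq]
      gcongr
    · induction m, hTm using Nat.le_induction with
      | base => simp [sq]
      | succ m hTm ih =>
        have hterm : 2 * (((m + 1 : ℕ) : ℝ) ^ 2)⁻¹ * (m + 1 : ℕ) ^ 3 = 2 * (m + 1 : ℝ) := by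
          push_cast
          field_simp
        rw [sum_Ioc_succ_top hTm, hterm]
        push_cast
        nlinarith [(Nat.cast_nonneg T : (0 : ℝ) ≤ T)]
  have hM0 : 0 ≤ M := by simpa using hM 0
  have htail (n : ℕ) : ∑ τ ∈ Ioc T n, 2 * ((τ : ℝ) ^ 2)⁻¹ ≤ 4 / (T + 1) := by
    rw [← mul_sum]
    have := sum_Ioo_inv_sq_le (α := ℝ) T (n + 1)
    rw [Ioo_add_one_right_eq_Ioc] at this
    calc _ ≤ 2 * (2 / (T + 1) : ℝ) := by gcongr
      _ = 4 / (T + 1) := by ring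
  calc ∑ x ∈ X, (r x : ℝ) ^ 2
      ≤ ∑ x ∈ X, (T * (r x : ℝ) + ∑ τ ∈ Ioc T (r x), 2 * ((τ : ℝ) ^ 2)⁻¹ * τ ^ 3) :=
        sum_le_sum fun x _ => hsq (r x)
    _ ≤ T * ∑ x ∈ X, (r x : ℝ) + M * ∑ τ ∈ Ioc T (X.sup r), 2 * ((τ : ℝ) ^ 2)⁻¹ := by
        rw [sum_add_distrib, ← mul_sum]
        gcongr
        exact sum_sum_Ioc_le_of_card_le hM (fun x hx => le_sup hx) T fun τ => by positivity
    _ ≤ T * ∑ x ∈ X, (r x : ℝ) + M * (4 / (T + 1)) := by gcongr; exact htail _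
    _ = _ := by ring

-- As `∑ r² ≤ t ∑ r + 4 M / t` for all `t > 0`, a quadratic in `t` is nonnegative; the claim is
-- that its discriminant is nonpositive.
theorem sq_sum_sq_le_of_card_le (hM : ∀ τ : ℕ, (#{x ∈ X | τ ≤ r x} : ℝ) * τ ^ 3 ≤ M) :
    (∑ x ∈ X, (r x : ℝ) ^ 2) ^ 2 ≤ 16 * M * ∑ x ∈ X, (r x : ℝ) := by
  have hM0 : 0 ≤ M := by simpa using hM 0
  have hQ : 0 ≤ ∑ x ∈ X, (r x : ℝ) ^ 2 := by positivity
  have hS : 0 ≤ ∑ x ∈ X, (r x : ℝ) := by positivity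
  have hsum := sum_sq_le_of_card_le hM
  set Q := ∑ x ∈ X, (r x : ℝ) ^ 2
  set S := ∑ x ∈ X, (r x : ℝ)
  have hquadratic (t : ℝ) : 0 ≤ S * (t * t) + -Q * t + 4 * M := by
    rcases le_or_gt t 0 with ht | ht
    · nlinarith [mul_nonneg hS (mul_self_nonneg t), mul_nonneg hQ (neg_nonneg.2 ht)]
    · have hfloor : Q ≤ t * S + 4 * M / t := (hsum ⌊t⌋₊).trans <| by
        gcongr
        exacts [Nat.floor_le ht.le, (Nat.lt_floor_add_one t).le]
      rw [← sub_le_iff_le_add', le_div_iff₀ ht] at hfloor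
      linarith
  have := discrim_le_zero hquadratic
  rw [discrim] at this
  linarith

end Moments

section DoubleCounting

variable {ι κ : Type*}

theorem sum_le_two_mul_sum_popular (X : Finset ι) (r : ι → ℕ) :
    ∑ x ∈ X, r x ≤ 2 * ∑ x ∈ X with ∑ y ∈ X, r y ≤ 2 * #X * r x, r x := by
  rcases X.eq_empty_or_nonempty with rfl | hX
  · simp
  have hunpopular : 2 * ∑ x ∈ X with ¬ ∑ y ∈ X, r y ≤ 2 * #X * r x, r x ≤ ∑ y ∈ X, r y := by
    refine Nat.le_of_mul_le_mul_left ?_ hX.card_pos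
    calc #X * (2 * ∑ x ∈ X with ¬ ∑ y ∈ X, r y ≤ 2 * #X * r x, r x)
        = ∑ x ∈ X with ¬ ∑ y ∈ X, r y ≤ 2 * #X * r x, 2 * #X * r x := by rw [← mul_sum]; ring
      _ ≤ #{x ∈ X | ¬ ∑ y ∈ X, r y ≤ 2 * #X * r x} * ∑ y ∈ X, r y :=
        sum_le_card_nsmul _ _ _ fun x hx => (not_le.1 (mem_filter.1 hx).2).le
      _ ≤ #X * ∑ y ∈ X, r y := Nat.mul_le_mul_right _ (card_filter_le _ _)
  have := sum_filter_add_sum_filter_not X (fun x => ∑ y ∈ X, r y ≤ 2 * #X * r x) r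
  omega

theorem card_sq_le_card_mul_card_collisions [DecidableEq κ] {S : Finset ι} {W : Finset κ}
    {φ : ι → κ} (hφ : ∀ x ∈ S, φ x ∈ W) : #S ^ 2 ≤ #W * #{p ∈ S ×ˢ S | φ p.1 = φ p.2} := by
  have hcollisions : #{p ∈ S ×ˢ S | φ p.1 = φ p.2} = ∑ w ∈ W, #{x ∈ S | φ x = w} ^ 2 := by
    rw [card_eq_sum_card_fiberwise (t := W) (f := fun p => φ p.1) fun p hp =>
      hφ _ (mem_product.1 (mem_filter.1 hp).1).1]
    refine sum_congr rfl fun w _ => ?_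
    rw [sq, ← card_product]
    congr 1
    ext p
    simp only [mem_filter, mem_product]
    grind
  rw [hcollisions, card_eq_sum_card_fiberwise hφ]
  exact sq_sum_le_card_mul_sum_sq

end DoubleCounting

section Energy

open scoped Combinatorics.Additive

variable {G : Type*} [AddCommGroup G] [DecidableEq G]

theorem addConvolution_eq_card_filter_sub_mem (A B : Finset G) (x : G) :
    A.addConvolution B x = #{b ∈ B | x - b ∈ A} := by
  refine card_nbij' Prod.snd (fun b => (x - b, b)) ?_ ?_ ?_ ?_
  · rintro ⟨a, b⟩ h
    simp only [coe_filter, mem_product, Set.mem_ofPred_eq] at h ⊢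
    exact ⟨h.1.2, by rw [← h.2, add_sub_cancel_right]; exact h.1.1⟩
  all_goals simp +contextual [Set.MapsTo, Set.LeftInvOn, ← eq_sub_iff_add_eq]

theorem sum_addConvolution (A B : Finset G) : ∑ x ∈ A + B, A.addConvolution B x = #A * #B := by
  rw [← card_product]
  refine (card_eq_sum_card_fiberwise fun p hp => ?_).symm
  exact add_mem_add (mem_product.1 hp).1 (mem_product.1 hp).2

theorem sum_addConvolution_le (A B X : Finset G) : ∑ x ∈ X, A.addConvolution B x ≤ #A * #B :=
  (sum_card_fiberwise_eq_card_filter (A ×ˢ B) X fun p => p.1 + p.2).trans_le <|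
    (card_filter_le _ _).trans_eq (card_product A B)

theorem sum_card_translates {ι : Type*} (A B X : Finset G) (C : Finset ι) :
    ∑ ℓ ∈ B ×ˢ C, #{x ∈ X | x - ℓ.1 ∈ A} = #C * ∑ x ∈ X, A.addConvolution B x := by
  have hC : ∑ ℓ ∈ B ×ˢ C, #{x ∈ X | x - ℓ.1 ∈ A} = #C * ∑ b ∈ B, #{x ∈ X | x - b ∈ A} := by
    rw [sum_product, mul_sum]
    simp only [sum_const, smul_eq_mul]
  rw [hC]
  simp only [addConvolution_eq_card_filter_sub_mem, card_filter]
  rw [sum_comm]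

/-- The third moment energy `E₃(A)`: the sum of the cubes of the numbers of representations
`x = a - a'` with `a, a' ∈ A`. -/
def thirdEnergy (A : Finset G) : ℕ := ∑ x ∈ A - A, A.addConvolution (-A) x ^ 3

-- A collision gives three representations `a - a' = u - u' = (u - s) - (u' - s)` of one difference.
theorem card_translate_collisions_le_thirdEnergy (A P : Finset G) :
    #{p ∈ (P.sigma fun s => A ×ˢ (A ∩ (s +ᵥ A))) ×ˢ (P.sigma fun s => A ×ˢ (A ∩ (s +ᵥ A))) |
      (p.1.1, p.1.2.2 - p.1.2.1) = (p.2.1, p.2.2.2 - p.2.2.1)} ≤ thirdEnergy A := by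
  have hthird : thirdEnergy A = #((A - A).sigma fun x =>
      (A ∩ (x +ᵥ A)) ×ˢ (A ∩ (x +ᵥ A)) ×ˢ (A ∩ (x +ᵥ A))) := by
    simp only [thirdEnergy, card_sigma, card_product, card_inter_vadd, pow_three]
  rw [hthird]
  refine card_le_card_of_injOn
    (fun p => ⟨p.1.2.1 - p.2.2.1, p.1.2.1, p.1.2.2, p.1.2.2 - p.1.1⟩) ?_ ?_
  · rintro ⟨⟨s, a, u⟩, ⟨s', a', u'⟩⟩ hp
    simp only [mem_coe, mem_filter, mem_product, mem_sigma, mem_inter, Prod.mk.injEq,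
      ← neg_vadd_mem_iff, vadd_eq_add] at hp ⊢
    obtain ⟨⟨⟨-, ha, hu, hus⟩, -, ha', hu', hus'⟩, rfl, heq⟩ := hp
    have hu'_eq : u' = -(a - a') + u := by rw [← sub_add_cancel u' a', ← heq]; abel
    refine ⟨sub_mem_sub ha ha', ⟨ha, ?_⟩, ⟨hu, hu'_eq ▸ hu'⟩, ?_, ?_⟩
    · simpa using ha'
    · rwa [← neg_add_eq_sub]
    · convert hus' using 1
      rw [hu'_eq]
      abel
  · rintro ⟨⟨s, a, u⟩, ⟨s', a', u'⟩⟩ hp ⟨⟨t, b, v⟩, ⟨t', b', v'⟩⟩ hq h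
    simp only [mem_coe, mem_filter, Prod.mk.injEq] at hp hq
    simp only [Sigma.mk.injEq, heq_eq_eq, Prod.mk.injEq] at h ⊢
    obtain ⟨-, rfl, hu⟩ := hp
    obtain ⟨-, rfl, hv⟩ := hq
    obtain ⟨hsub, rfl, rfl, hs⟩ := h
    obtain rfl := sub_right_injective hsub
    obtain rfl := sub_right_injective hs
    obtain rfl := sub_left_injective (hu.symm.trans hv)
    simp

theorem sq_card_mul_sum_le_sum_mul_thirdEnergy (A P : Finset G) :
    (#A * ∑ s ∈ P, A.addConvolution (-A) s) ^ 2 ≤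
      (∑ s ∈ P, (A - A).addConvolution (-(A - A)) s) * thirdEnergy A := by
  have hS : #(P.sigma fun s => A ×ˢ (A ∩ (s +ᵥ A))) = #A * ∑ s ∈ P, A.addConvolution (-A) s := by
    simp only [card_sigma, card_product, card_inter_vadd, mul_sum]
  have hW : #(P.biUnion fun s => {s} ×ˢ ((A - A) ∩ (s +ᵥ (A - A)))) ≤
      ∑ s ∈ P, (A - A).addConvolution (-(A - A)) s := by
    refine card_biUnion_le.trans_eq ?_
    simp only [card_product, card_singleton, one_mul, card_inter_vadd]
  rw [← hS]
  refine (card_sq_le_card_mul_card_collisions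
    (φ := fun z : (_ : G) × G × G => (z.1, z.2.2 - z.2.1)) ?_).trans
    (Nat.mul_le_mul hW (card_translate_collisions_le_thirdEnergy A P))
  rintro ⟨s, a, u⟩ hz
  simp only [mem_sigma, mem_product, mem_inter, mem_biUnion, mem_singleton,
    ← neg_vadd_mem_iff, vadd_eq_add] at hz ⊢
  refine ⟨s, hz.1, rfl, sub_mem_sub hz.2.2.1 hz.2.1, ?_⟩
  rw [← add_sub_assoc]
  exact sub_mem_sub hz.2.2.2 hz.2.1

theorem sum_addConvolution_mul_addConvolution_le_addEnergy (A D P : Finset G) :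
    ∑ s ∈ P, A.addConvolution (-A) s * D.addConvolution (-D) s ≤ E[A, D] := by
  simp only [← card_inter_vadd, ← card_product, ← card_sigma]
  refine card_le_card_of_injOn (fun z => ((z.2.1, z.2.1 - z.1), (z.2.2 - z.1, z.2.2))) ?_ ?_
  · rintro ⟨s, a, d⟩ hz
    simp only [mem_coe, mem_sigma, mem_product, mem_inter, mem_filter, ← neg_vadd_mem_iff,
      vadd_eq_add, neg_add_eq_sub] at hz ⊢
    obtain ⟨-, ⟨ha, has⟩, hd, hds⟩ := hz
    exact ⟨⟨⟨ha, has⟩, hds, hd⟩, by abel⟩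
  · rintro ⟨s, a, d⟩ - ⟨t, b, e⟩ - h
    simp only [Prod.mk.injEq] at h
    obtain ⟨⟨rfl, hst⟩, -, rfl⟩ := h
    obtain rfl := sub_right_injective hst
    rfl

theorem card_pow_eight_le (A : Finset G) :
    #A ^ 8 ≤ 8 * #(A - A) * E[A, A - A] * thirdEnergy A := by
  set D := A - A with hD
  set P := {s ∈ D | #A ^ 2 ≤ 2 * #D * A.addConvolution (-A) s}
  set T := ∑ s ∈ P, A.addConvolution (-A) s
  set U := ∑ s ∈ P, D.addConvolution (-D) s
  have hpopular : #A ^ 2 ≤ 2 * T := by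
    have htotal : ∑ s ∈ D, A.addConvolution (-A) s = #A ^ 2 := by
      rw [hD, sub_eq_add_neg, sum_addConvolution, card_neg, sq]
    simpa only [htotal] using sum_le_two_mul_sum_popular D (A.addConvolution (-A))
  have hthird : (#A * T) ^ 2 ≤ U * thirdEnergy A := sq_card_mul_sum_le_sum_mul_thirdEnergy A P
  have henergy : #A ^ 2 * U ≤ 2 * #D * E[A, D] := by
    refine le_trans ?_
      (Nat.mul_le_mul_left _ (sum_addConvolution_mul_addConvolution_le_addEnergy A D P))
    rw [mul_sum, mul_sum]
    refine sum_le_sum fun s hs => ?_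
    rw [← mul_assoc]
    exact Nat.mul_le_mul_right _ (mem_filter.1 hs).2
  calc #A ^ 8 = #A ^ 4 * (#A ^ 2) ^ 2 := by ring
    _ ≤ #A ^ 4 * (2 * T) ^ 2 := by gcongr
    _ = 4 * #A ^ 2 * (#A * T) ^ 2 := by ring
    _ ≤ 4 * #A ^ 2 * (U * thirdEnergy A) := by gcongr
    _ = 4 * (#A ^ 2 * U) * thirdEnergy A := by ring
    _ ≤ 4 * (2 * #D * E[A, D]) * thirdEnergy A := by gcongr
    _ = 8 * #D * E[A, D] * thirdEnergy A := by ring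

end Energy

section StrictConvexity

open scoped Combinatorics.Additive

variable {𝕜 : Type*} [Field 𝕜] [LinearOrder 𝕜] [IsStrictOrderedRing 𝕜] {I : Set 𝕜} {f : 𝕜 → 𝕜}

theorem add_lt_add_of_strictConvexOn (hf : StrictConvexOn 𝕜 I f) {a b c d : 𝕜} (ha : a ∈ I)
    (hd : d ∈ I) (hab : a < b) (hac : a < c) (hsum : a + d = b + c) :
    f b + f c < f a + f d := by
  have had : a < d := by linarith
  have hda : 0 < d - a := sub_pos.2 had
  set t := (d - b) / (d - a)
  set s := (b - a) / (d - a)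
  have ht : 0 < t := div_pos (by linarith) hda
  have hs : 0 < s := div_pos (by linarith) hda
  have hts : t + s = 1 := by
    rw [← add_div, div_eq_one_iff_eq hda.ne']
    ring
  have hb : t • a + s • d = b := by
    simp only [t, s, smul_eq_mul]
    field_simp
    ring
  have hc : s • a + t • d = c := by
    simp only [smul_eq_mul] at hb ⊢
    linear_combination (a + d) * hts - hb + hsum
  have hfb := hf.2 ha hd had.ne ht hs hts
  have hfc := hf.2 ha hd had.ne hs ht (by rw [add_comm, hts])
  rw [hb] at hfb
  rw [hc] at hfc
  simp only [smul_eq_mul] at hfb hfc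
  linear_combination hfb + hfc + (f a + f d) * hts

theorem sub_lt_sub_of_strictConvexOn (hf : StrictConvexOn 𝕜 I f) {x x' b b' : 𝕜}
    (hxb' : x - b' ∈ I) (hx'b : x' - b ∈ I) (hx : x < x') (hb : b < b') :
    f (x - b) - f (x - b') < f (x' - b) - f (x' - b') := by
  have := add_lt_add_of_strictConvexOn hf hxb' hx'b (b := x - b) (c := x' - b')
    (by linarith) (by linarith) (by ring)
  linarith

theorem eq_of_translates_meet_twice (hf : StrictConvexOn 𝕜 I f) {x x' b b' c c' : 𝕜}
    (hxb : x - b ∈ I) (hx'b : x' - b ∈ I) (hxb' : x - b' ∈ I) (hx'b' : x' - b' ∈ I)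
    (hne : x ≠ x') (hx : f (x - b) + c = f (x - b') + c')
    (hx' : f (x' - b) + c = f (x' - b') + c') : b = b' ∧ c = c' := by
  have hb : b = b' := by
    rcases lt_trichotomy b b' with hbb' | hbb' | hbb'
    · rcases hne.lt_or_gt with hxx' | hxx'
      · linarith [sub_lt_sub_of_strictConvexOn hf hxb' hx'b hxx' hbb']
      · linarith [sub_lt_sub_of_strictConvexOn hf hx'b' hxb hxx' hbb']
    · exact hbb'
    · rcases hne.lt_or_gt with hxx' | hxx'
      · linarith [sub_lt_sub_of_strictConvexOn hf hxb hx'b' hxx' hbb']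
      · linarith [sub_lt_sub_of_strictConvexOn hf hx'b hxb' hxx' hbb']
  subst hb
  exact ⟨rfl, add_left_cancel hx⟩

theorem card_le_two_mul_card_image (hf : StrictConvexOn 𝕜 I f) {A : Finset 𝕜}
    (hA : (A : Set 𝕜) ⊆ I) : #A ≤ 2 * #(A.image f) := by
  refine card_le_mul_card_image A 2 fun y hy => ?_
  have hne : {x ∈ A | f x = y}.Nonempty := by
    obtain ⟨x, hx, hfx⟩ := mem_image.1 hy
    exact ⟨x, mem_filter.2 ⟨hx, hfx⟩⟩
  set S := {x ∈ A | f x = y}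
  obtain ⟨hminA, hfmin⟩ := mem_filter.1 (S.min'_mem hne)
  obtain ⟨hmaxA, hfmax⟩ := mem_filter.1 (S.max'_mem hne)
  refine (card_le_card fun x hx => ?_).trans (card_le_two (a := S.min' hne) (b := S.max' hne))
  rw [mem_insert, mem_singleton]
  by_contra! hends
  have hmin : S.min' hne < x := (S.min'_le x hx).lt_of_ne' hends.1
  have hmax : x < S.max' hne := (S.le_max' x hx).lt_of_ne hends.2
  have hbetween : x ∈ openSegment 𝕜 (S.min' hne) (S.max' hne) := by
    rw [openSegment_eq_Ioo (hmin.trans hmax)]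
    exact ⟨hmin, hmax⟩
  have hlt := hf.lt_on_openSegment (hA hminA) (hA hmaxA) (hmin.trans hmax).ne hbetween
  rw [hfmin, hfmax, (mem_filter.1 hx).2, max_self] at hlt
  exact hlt.false

theorem card_le_two_mul_card_image_add (hf : StrictConvexOn 𝕜 I f) {A C : Finset 𝕜}
    (hA : (A : Set 𝕜) ⊆ I) (hC : C.Nonempty) : #A ≤ 2 * #(A.image f + C) :=
  (card_le_two_mul_card_image hf hA).trans <|
    Nat.mul_le_mul_left 2 (card_le_card_add_right hC)

variable {A B C X : Finset 𝕜}

theorem isCurveFamily_translates (hf : StrictConvexOn 𝕜 I f) (hA : (A : Set 𝕜) ⊆ I)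
    (B C X : Finset 𝕜) :
    IsCurveFamily (B ×ˢ C) (fun ℓ x => f (x - ℓ.1) + ℓ.2) (fun ℓ => {x ∈ X | x - ℓ.1 ∈ A}) X
      (A.image f + C) where
  subset _ _ := filter_subset _ _
  map_mem _ hℓ _ hx :=
    add_mem_add (mem_image_of_mem f (mem_filter.1 hx).2) (mem_product.1 hℓ).2
  orderQuasiconvexOn ℓ _ x hx y _ z hz hxy hyz := by
    rw [max_add_add_right]
    refine add_le_add_left ?_ _
    exact hf.convexOn.le_max_of_mem_Icc (hA (mem_filter.1 hx).2) (hA (mem_filter.1 hz).2)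
      ⟨sub_le_sub_right hxy _, sub_le_sub_right hyz _⟩
  eq_of_meet_twice ℓ _ ℓ' _ x hx hx' x' hy hy' hne h h' := by
    have := eq_of_translates_meet_twice hf (hA (mem_filter.1 hx).2) (hA (mem_filter.1 hy).2)
      (hA (mem_filter.1 hx').2) (hA (mem_filter.1 hy').2) hne h h'
    exact Prod.ext this.1 this.2

theorem sum_addConvolution_pow_three_mul_card_le (hf : StrictConvexOn 𝕜 I f)
    (hA : (A : Set 𝕜) ⊆ I) (h : 8 * #B ≤ ∑ x ∈ X, A.addConvolution B x) :
    (∑ x ∈ X, A.addConvolution B x) ^ 3 * #C ≤ 2048 * (#B * #X * #(A.image f + C)) ^ 2 := by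
  rcases C.eq_empty_or_nonempty with rfl | hC
  · simp
  have hAF : #A ≤ 2 * #(A.image f + C) := card_le_two_mul_card_image_add hf hA hC
  have hAB : ∑ x ∈ X, A.addConvolution B x ≤ #A * #B := sum_addConvolution_le A B X
  have hincidence := (isCurveFamily_translates hf hA B C X).sum_card_pow_three_le
  rw [sum_card_translates, card_product] at hincidence
  set N := ∑ x ∈ X, A.addConvolution B x
  set F := #(A.image f + C)
  refine Nat.le_of_mul_le_mul_left ?_ (pow_pos hC.card_pos 2)
  calc #C ^ 2 * (N ^ 3 * #C) = (#C * N) ^ 3 := by ring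
    _ ≤ 2048 * (#B * #C * #X * F) ^ 2 := by
      refine hincidence ?_ ?_
      · calc 8 * (#B * #C) = #C * (8 * #B) := by ring
          _ ≤ #C * N := by gcongr
      · calc #C * N ≤ #C * (2 * F * #B) := by gcongr; exact hAB.trans (by gcongr)
          _ ≤ 8 * (#B * #C) * F := by nlinarith [Nat.zero_le (#B * #C * F)]
    _ = #C ^ 2 * (2048 * (#B * #X * F) ^ 2) := by ring

theorem card_mul_pow_three_mul_card_le (hf : StrictConvexOn 𝕜 I f) (hA : (A : Set 𝕜) ⊆ I) {τ : ℕ}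
    (hτ : ∀ x ∈ X, τ ≤ A.addConvolution B x) :
    #X * τ ^ 3 * #C ≤ 2048 * (#(A.image f + C) * #B) ^ 2 := by
  rcases C.eq_empty_or_nonempty with rfl | hC
  · simp
  rcases X.eq_empty_or_nonempty with rfl | hX
  · simp
  have hsum : #X * τ ≤ ∑ x ∈ X, A.addConvolution B x := card_nsmul_le_sum _ _ _ hτ
  have hincidence := sum_addConvolution_pow_three_mul_card_le (B := B) (C := C) (X := X) hf hA
  set N := ∑ x ∈ X, A.addConvolution B x
  rcases le_or_gt (8 * #B) N with hN | hN
  · refine Nat.le_of_mul_le_mul_left ?_ (pow_pos hX.card_pos 2)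
    calc #X ^ 2 * (#X * τ ^ 3 * #C) = (#X * τ) ^ 3 * #C := by ring
      _ ≤ N ^ 3 * #C := by gcongr
      _ ≤ 2048 * (#B * #X * #(A.image f + C)) ^ 2 := hincidence hN
      _ = #X ^ 2 * (2048 * (#(A.image f + C) * #B) ^ 2) := by ring
  · rcases τ.eq_zero_or_pos with rfl | hτ0
    · simp
    obtain ⟨x, hx⟩ := hX
    have hτA : τ ≤ #A := (hτ x hx).trans addConvolution_le_card_left
    have hA0 : A.Nonempty := card_pos.1 (hτ0.trans_le hτA)
    have hAF : #A ≤ 2 * #(A.image f + C) := card_le_two_mul_card_image_add hf hA hC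
    have hτB : τ ≤ #B := (hτ x hx).trans addConvolution_le_card_right
    have hCF : #C ≤ #(A.image f + C) := card_le_card_add_left (hA0.image f)
    calc #X * τ ^ 3 * #C = (#X * τ) * τ * τ * #C := by ring
      _ ≤ (8 * #B) * #B * (2 * #(A.image f + C)) * #(A.image f + C) := by
        refine mul_le_mul' (mul_le_mul' (mul_le_mul' (hsum.trans hN.le) hτB) (hτA.trans hAF)) hCF
      _ ≤ 2048 * (#(A.image f + C) * #B) ^ 2 := by
        nlinarith [Nat.zero_le ((#(A.image f + C) * #B) ^ 2)]

theorem card_filter_le_addConvolution_mul_le (hf : StrictConvexOn 𝕜 I f) (hA : (A : Set 𝕜) ⊆ I)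
    (B : Finset 𝕜) (hC : C.Nonempty) (X : Finset 𝕜) (τ : ℕ) :
    (#{x ∈ X | τ ≤ A.addConvolution B x} : ℝ) * τ ^ 3 ≤
      2048 * (#(A.image f + C) * #B : ℝ) ^ 2 / #C := by
  rw [le_div_iff₀ (by exact_mod_cast hC.card_pos)]
  exact_mod_cast card_mul_pow_three_mul_card_le hf hA fun x hx => (mem_filter.1 hx).2

theorem card_mul_sq_addEnergy_le (hf : StrictConvexOn 𝕜 I f) (hA : (A : Set 𝕜) ⊆ I)
    (B : Finset 𝕜) (hC : C.Nonempty) :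
    (#C * E[A, B] ^ 2 : ℝ) ≤ 32768 * #(A.image f + C) ^ 2 * #A * #B ^ 3 := by
  have : (0 : ℝ) < #C := by exact_mod_cast hC.card_pos
  have henergy : (E[A, B] : ℝ) = ∑ x ∈ A + B, (A.addConvolution B x : ℝ) ^ 2 := by
    exact_mod_cast addEnergy_eq_sum_sq' A B
  have htotal : ∑ x ∈ A + B, (A.addConvolution B x : ℝ) = #A * #B := by
    exact_mod_cast sum_addConvolution A B
  have hmoment := sq_sum_sq_le_of_card_le
    (card_filter_le_addConvolution_mul_le hf hA B hC (A + B))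
  rw [htotal, ← henergy] at hmoment
  calc (#C * E[A, B] ^ 2 : ℝ)
      ≤ #C * (16 * (2048 * (#(A.image f + C) * #B : ℝ) ^ 2 / #C) * (#A * #B)) := by gcongr
    _ = 32768 * #(A.image f + C) ^ 2 * #A * #B ^ 3 := by field_simp; ring

theorem card_mul_thirdEnergy_le (hf : StrictConvexOn 𝕜 I f) (hA : (A : Set 𝕜) ⊆ I)
    (hC : C.Nonempty) :
    (#C * thirdEnergy A : ℝ) ≤ 6144 * #(A.image f + C) ^ 2 * #A ^ 2 * (1 + Real.log #A) := by
  have : (0 : ℝ) < #C := by exact_mod_cast hC.card_pos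
  have hmoment := sum_cube_le_of_card_le
    (card_filter_le_addConvolution_mul_le hf hA (-A) hC (A - A))
    fun _ _ => addConvolution_le_card_left
  calc (#C * thirdEnergy A : ℝ) = #C * ∑ x ∈ A - A, (A.addConvolution (-A) x : ℝ) ^ 3 := by
        push_cast [thirdEnergy]; rfl
    _ ≤ #C * (3 * (2048 * (#(A.image f + C) * #(-A) : ℝ) ^ 2 / #C) * (1 + Real.log #A)) := by
        gcongr
    _ = 6144 * #(A.image f + C) ^ 2 * #A ^ 2 * (1 + Real.log #A) := by
        rw [card_neg]; field_simp; ring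

theorem card_pow_eleven_mul_card_pow_three_le (hf : StrictConvexOn 𝕜 I f) (hA : (A : Set 𝕜) ⊆ I)
    (C : Finset 𝕜) :
    (#A ^ 11 * #C ^ 3 : ℝ) ≤ 64 * 32768 * 6144 ^ 2 * #(A.image f + C) ^ 6 * #(A - A) ^ 5 *
      (1 + Real.log #A) ^ 2 := by
  rcases C.eq_empty_or_nonempty with rfl | hC
  · simp
  rcases A.eq_empty_or_nonempty with rfl | hA'
  · simp
  have hA0 : (0 : ℝ) < #A := by exact_mod_cast hA'.card_pos
  have height : (#A ^ 8 : ℝ) ≤ 8 * #(A - A) * E[A, A - A] * thirdEnergy A := by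
    exact_mod_cast card_pow_eight_le A
  have henergy := card_mul_sq_addEnergy_le hf hA (A - A) hC
  have hthird := card_mul_thirdEnergy_le hf hA hC
  set F : ℝ := ((#(A.image f + C) : ℕ) : ℝ)
  set D : ℝ := ((#(A - A) : ℕ) : ℝ)
  set Λ := 1 + Real.log #A
  refine le_of_mul_le_mul_left ?_ (pow_pos hA0 5)
  calc (#A ^ 5 * (#A ^ 11 * #C ^ 3) : ℝ) = #C ^ 3 * (#A ^ 8) ^ 2 := by ring
    _ ≤ #C ^ 3 * (8 * D * E[A, A - A] * thirdEnergy A) ^ 2 := by gcongr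
    _ = 64 * D ^ 2 * (#C * E[A, A - A] ^ 2) * (#C * thirdEnergy A) ^ 2 := by ring
    _ ≤ 64 * D ^ 2 * (32768 * F ^ 2 * #A * D ^ 3) * (6144 * F ^ 2 * #A ^ 2 * Λ) ^ 2 := by gcongr
    _ = #A ^ 5 * (64 * 32768 * 6144 ^ 2 * F ^ 6 * D ^ 5 * Λ ^ 2) := by ring

theorem card_pow_fourteen_le (hf : StrictConvexOn 𝕜 I f) (hA : (A : Set 𝕜) ⊆ I) (hcard : 2 ≤ #A) :
    (#A : ℝ) ^ 14 ≤ 72 * (64 * 32768 * 6144 ^ 2) * #(A.image f + A.image f) ^ 6 * #(A - A) ^ 5 *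
      Real.log #A ^ 2 := by
  have hA2 : (2 : ℝ) ≤ #A := by exact_mod_cast hcard
  have hlog : 1 + Real.log #A ≤ 3 * Real.log #A := by
    linarith [Real.log_two_gt_d9, Real.log_le_log two_pos hA2]
  have : 0 ≤ Real.log #A := Real.log_nonneg (by linarith)
  have himage : (#A : ℝ) ≤ 2 * #(A.image f) := by
    exact_mod_cast card_le_two_mul_card_image hf hA
  have hmain := card_pow_eleven_mul_card_pow_three_le hf hA (A.image f)
  calc (#A : ℝ) ^ 14 = (#A ^ 11 * #A ^ 3 : ℝ) := by ring
    _ ≤ (#A ^ 11 * (2 * #(A.image f)) ^ 3 : ℝ) := by gcongr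
    _ = (8 * (#A ^ 11 * #(A.image f) ^ 3) : ℝ) := by ring
    _ ≤ (8 * (64 * 32768 * 6144 ^ 2 * #(A.image f + A.image f) ^ 6 * #(A - A) ^ 5 *
        (3 * Real.log #A) ^ 2) : ℝ) := by
      gcongr 8 * ?_
      exact hmain.trans (by gcongr)
    _ = _ := by ring

end StrictConvexity

theorem rpow_mul_rpow_div_rpow_le_of_pow_le {c m x y : ℝ} {a b k : ℕ} (hc : 0 < c) (hm : 0 ≤ m)
    (hx : 0 ≤ x) (hy : 0 < y) (hk : k ≠ 0) (h : x ^ a ≤ c * m ^ k * y ^ b) :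
    c⁻¹ ^ ((1 : ℝ) / k) * x ^ ((a : ℝ) / k) / y ^ ((b : ℝ) / k) ≤ m := by
  have hpow {z : ℝ} (hz : 0 ≤ z) (n : ℕ) : (z ^ ((n : ℝ) / k)) ^ k = z ^ n := by
    rw [← Real.rpow_mul_natCast hz, div_mul_cancel₀ _ (Nat.cast_ne_zero.2 hk), Real.rpow_natCast]
  have hpow_one : (c⁻¹ ^ ((1 : ℝ) / k)) ^ k = c⁻¹ := by
    simpa using hpow (inv_nonneg.2 hc.le) 1
  refine le_of_pow_le_pow_left₀ hk hm ?_
  rw [div_pow, mul_pow, hpow_one, hpow hx, hpow hy.le, div_le_iff₀ (pow_pos hy b),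
    inv_mul_le_iff₀ hc, ← mul_assoc]
  exact h

theorem stmt12_general : ∃ K : ℝ, 0 < K ∧
    ∀ (𝕜 : Type*) [Field 𝕜] [LinearOrder 𝕜] [IsStrictOrderedRing 𝕜] (I : Set 𝕜) (f : 𝕜 → 𝕜),
    StrictConvexOn 𝕜 I f → ∀ A : Finset 𝕜, (A : Set 𝕜) ⊆ I → 2 ≤ #A →
    max (#(A.image f + A.image f) : ℝ) (#(A - A) : ℝ) ≥
      K * (#A : ℝ) ^ ((14 : ℝ) / 11) / (Real.log #A) ^ ((2 : ℝ) / 11) := by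
  refine ⟨((72 * (64 * 32768 * 6144 ^ 2) : ℝ)⁻¹) ^ ((1 : ℝ) / 11), by positivity,
    fun 𝕜 _ _ _ I f hf A hA hcard => ?_⟩
  have hlog : 0 < Real.log #A := Real.log_pos (by exact_mod_cast hcard)
  set m := max (#(A.image f + A.image f) : ℝ) (#(A - A) : ℝ)
  have hpow : (#A : ℝ) ^ 14 ≤ 72 * (64 * 32768 * 6144 ^ 2) * m ^ 11 * Real.log #A ^ 2 :=
    calc (#A : ℝ) ^ 14 ≤ _ := card_pow_fourteen_le hf hA hcard
      _ ≤ 72 * (64 * 32768 * 6144 ^ 2) * m ^ 6 * m ^ 5 * Real.log #A ^ 2 := by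
        gcongr
        exacts [le_max_left _ _, le_max_right _ _]
      _ = 72 * (64 * 32768 * 6144 ^ 2) * m ^ 11 * Real.log #A ^ 2 := by ring
  simpa only [Nat.cast_ofNat] using rpow_mul_rpow_div_rpow_le_of_pow_le (by positivity)
    (by positivity) (Nat.cast_nonneg _) hlog (by norm_num) hpow

theorem stmt12 : ∃ K : ℝ, 0 < K ∧
    ∀ f : ℝ → ℝ, Continuous f → StrictConvexOn ℝ Set.univ f →
    ∀ A : Finset ℝ, 2 ≤ A.card →
    max ((A.image f + A.image f).card : ℝ) ((A - A).card : ℝ) ≥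
      K * (A.card : ℝ) ^ ((14 : ℝ) / 11) / (Real.log A.card) ^ ((2 : ℝ) / 11) := by
  obtain ⟨K, hK, hbound⟩ := stmt12_general
  exact ⟨K, hK, fun f _ hf A hA => hbound ℝ Set.univ f hf A (Set.subset_univ _) hA⟩
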